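/- For any claw-free graph G and any graph H, γ(G □ H) ≥ (2/3)·γ(G)·γ(H). -/

import Mathlib

open SimpleGraph

/-- `S` is a dominating set of `G`. -/
def IsDomSet {V : Type*} (G : SimpleGraph V) (S : Set V) : Prop :=
  ∀ v : V, v ∈ S ∨ ∃ u ∈ S, G.Adj u v

/-- The domination number of a finite graph. -/
noncomputable def domNum {V : Type*} [Fintype V] (G : SimpleGraph V) : ℕ :=
  sInf {n | ∃ S : Finset V, IsDomSet G ↑S ∧ S.card = n}

/-- `Γ` is a minimum dominating set of `G`. -/
def IsMinDomSet {V : Type*} [Fintype V] (G : SimpleGraph V) (Γ : Finset V) : Prop :=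
  IsDomSet G ↑Γ ∧ Γ.card = domNum G

/-- `G` is a cograph: it has no induced `P₄`. -/
def IsCograph {V : Type*} (G : SimpleGraph V) : Prop :=
  ¬ ∃ f : Fin 4 ↪ V, ∀ a b : Fin 4, (pathGraph 4).Adj a b ↔ G.Adj (f a) (f b)

/-- `w` is a private neighbor of `v` with respect to `Γ`. -/
def PrivNbr {V : Type*} (G : SimpleGraph V) (Γ : Set V) (v w : V) : Prop :=
  w ∉ Γ ∧ G.Adj v w ∧ ∀ u ∈ Γ, G.Adj u w → u = v

/-- `w` is a shared neighbor of exactly `v₁` and `v₂` within `Γ`. -/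
def SharedNbr {V : Type*} (G : SimpleGraph V) (Γ : Set V) (v₁ v₂ w : V) : Prop :=
  w ∉ Γ ∧ ∀ u ∈ Γ, G.Adj u w ↔ (u = v₁ ∨ u = v₂)

/-- `G` is claw-free: it has no induced `K_{1,3}`. -/
def IsClawFree {V : Type*} (G : SimpleGraph V) : Prop :=
  ¬ ∃ f : (Fin 1 ⊕ Fin 3) ↪ V, ∀ a b,
    (completeBipartiteGraph (Fin 1) (Fin 3)).Adj a b ↔ G.Adj (f a) (f b)

theorem claw_absurd {V : Type*} {G : SimpleGraph V} (hG : IsClawFree G) {c x y z : V}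
    (hx : G.Adj c x) (hy : G.Adj c y) (hz : G.Adj c z) (hxy : x ≠ y) (hxz : x ≠ z) (hyz : y ≠ z)
    (nxy : ¬ G.Adj x y) (nxz : ¬ G.Adj x z) (nyz : ¬ G.Adj y z) : False := by
  apply hG
  have h1 := hx.ne
  have h2 := hy.ne
  have h3 := hz.ne
  have nyx : ¬ G.Adj y x := fun h => nxy h.symm
  have nzx : ¬ G.Adj z x := fun h => nxz h.symm
  have nzy : ¬ G.Adj z y := fun h => nyz h.symm
  refine ⟨⟨Sum.elim (fun _ => c) ![x, y, z], ?_⟩, ?_⟩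
  · rintro (a | a) (b | b) h <;> fin_cases a <;> fin_cases b <;> simp_all
  · rintro (a | a) (b | b) <;> fin_cases a <;> fin_cases b <;>
      simp [completeBipartiteGraph] <;>
      first
        | exact hx | exact hy | exact hz | exact hx.symm | exact hy.symm | exact hz.symm
        | exact nxy | exact nxz | exact nyz | exact nyx | exact nzx | exact nzy

theorem domNum_le_card {V : Type*} [Fintype V] {G : SimpleGraph V} {S : Finset V}
    (h : IsDomSet G ↑S) : domNum G ≤ S.card :=
  Nat.sInf_le ⟨S, h, rfl⟩

theorem exists_domNum {V : Type*} [Fintype V] (G : SimpleGraph V) :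
    ∃ S : Finset V, IsDomSet G ↑S ∧ S.card = domNum G := by
  have : {n | ∃ S : Finset V, IsDomSet G ↑S ∧ S.card = n}.Nonempty :=
    ⟨_, Finset.univ, fun v => Or.inl (by simp), rfl⟩
  exact Nat.sInf_mem this

/-- Every finite set of vertices has a maximal independent subset. -/
theorem exists_maxIndep {V : Type*} (G : SimpleGraph V) (B : Finset V) :
    ∃ S ⊆ B, (∀ a ∈ S, ∀ b ∈ S, ¬ G.Adj a b) ∧ ∀ b ∈ B, b ∈ S ∨ ∃ s ∈ S, G.Adj s b := by
  classical
  induction B using Finset.induction_on with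
  | empty => exact ⟨∅, by simp, by simp, by simp⟩
  | insert a B ha ih =>
    obtain ⟨S, hS, hi, hd⟩ := ih
    by_cases h : ∃ s ∈ S, G.Adj s a
    · refine ⟨S, hS.trans (Finset.subset_insert _ _), hi, ?_⟩
      intro b hb
      rcases Finset.mem_insert.1 hb with rfl | hb
      · exact Or.inr h
      · exact hd b hb
    · push Not at h
      refine ⟨insert a S, Finset.insert_subset_insert _ hS, ?_, ?_⟩
      · intro x hx y hy hxy
        rcases Finset.mem_insert.1 hx with hx1 | hx1 <;>
          rcases Finset.mem_insert.1 hy with hy1 | hy1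
        · rw [hx1, hy1] at hxy
          exact G.loopless.irrefl _ hxy
        · rw [hx1] at hxy
          exact h _ hy1 hxy.symm
        · rw [hy1] at hxy
          exact h _ hx1 hxy
        · exact hi _ hx1 _ hy1 hxy
      · intro b hb
        rcases Finset.mem_insert.1 hb with rfl | hb
        · exact Or.inl (Finset.mem_insert_self _ _)
        · rcases hd b hb with h | ⟨s, hs, h⟩
          · exact Or.inl (Finset.mem_insert_of_mem h)
          · exact Or.inr ⟨s, Finset.mem_insert_of_mem hs, h⟩

/-- Ore's bound. -/
theorem exists_half {V : Type*} (G : SimpleGraph V) (B : Finset V)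
    (hB : ∀ b ∈ B, ∃ c ∈ B, G.Adj c b) :
    ∃ S : Finset V, 2 * S.card ≤ B.card ∧ ∀ b ∈ B, b ∈ S ∨ ∃ s ∈ S, G.Adj s b := by
  classical
  obtain ⟨S, hS, hi, hd⟩ := exists_maxIndep G B
  have hc := Finset.card_sdiff_add_card_eq_card hS
  by_cases h : 2 * S.card ≤ B.card
  · exact ⟨S, h, hd⟩
  · refine ⟨B \ S, by omega, ?_⟩
    intro b hb
    by_cases hbS : b ∈ S
    · obtain ⟨c, hc, hcb⟩ := hB b hb
      exact Or.inr ⟨c, Finset.mem_sdiff.2 ⟨hc, fun h => hi _ h _ hbS hcb⟩, hcb⟩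
    · exact Or.inl (Finset.mem_sdiff.2 ⟨hb, hbS⟩)

/-- Allan and Laskar: a claw-free graph has an independent minimum dominating set. -/
theorem exists_indep_min {V : Type*} [Fintype V] {G : SimpleGraph V} (hG : IsClawFree G) :
    ∃ S : Finset V, IsDomSet G ↑S ∧ S.card = domNum G ∧ ∀ a ∈ S, ∀ b ∈ S, ¬ G.Adj a b := by
  classical
  obtain ⟨D, hD, hc⟩ := exists_domNum G
  obtain ⟨S, hS, hi, hd⟩ := exists_maxIndep G D
  obtain ⟨T, hT, hTi, hTd⟩ := exists_maxIndep G
    (Finset.univ.filter (fun v => v ∉ S ∧ ∀ s ∈ S, ¬ G.Adj s v))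
  have hT' : ∀ t ∈ T, t ∉ S ∧ ∀ s ∈ S, ¬ G.Adj s t := fun t ht => by simpa using hT ht
  have hdom : IsDomSet G ↑(S ∪ T) := by
    intro v
    by_cases hv : v ∉ S ∧ ∀ s ∈ S, ¬ G.Adj s v
    · rcases hTd v (by simpa using hv) with h | ⟨t, ht, h⟩
      · exact Or.inl (by simp [h])
      · exact Or.inr ⟨t, by simp [ht], h⟩
    · by_cases hvS : v ∈ S
      · exact Or.inl (by simp [hvS])
      · have : ∃ s ∈ S, G.Adj s v := by
          by_contra hcon
          push Not at hcon
          exact hv ⟨hvS, hcon⟩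
        obtain ⟨s, hs, h⟩ := this
        exact Or.inr ⟨s, by simp [hs], h⟩
  have key : ∀ t ∈ T, ∃ d ∈ D \ S, G.Adj d t := by
    intro t ht
    obtain ⟨h1, h2⟩ := hT' t ht
    rcases hD t with h | ⟨d, hdD, h⟩
    · rcases hd t h with h | ⟨s, hs, h⟩
      · exact absurd h h1
      · exact absurd h (h2 s hs)
    · exact ⟨d, Finset.mem_sdiff.2 ⟨hdD, fun hdS => h2 d hdS h⟩, h⟩
  choose! f hf1 hf2 using key
  have hle : T.card ≤ (D \ S).card := by
    apply Finset.card_le_card_of_injOn f hf1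
    intro t ht t' ht' he
    by_contra hne
    have hfD := Finset.mem_sdiff.1 (hf1 t ht)
    rcases hd _ hfD.1 with h | ⟨s, hs, h⟩
    · exact hfD.2 h
    · have a1 := hf2 t ht
      have a2 := hf2 t' ht'
      rw [← he] at a2
      exact claw_absurd hG h.symm a1 a2 (fun e => (hT' t ht).1 (e ▸ hs))
        (fun e => (hT' t' ht').1 (e ▸ hs)) hne ((hT' t ht).2 s hs) ((hT' t' ht').2 s hs)
        (hTi t ht t' ht')
  have h1 := domNum_le_card hdom
  have h2 := Finset.card_union_le S T
  have h3 := Finset.card_sdiff_add_card_eq_card hS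
  refine ⟨S ∪ T, hdom, by omega, ?_⟩
  intro a ha b hb hab
  rcases Finset.mem_union.1 ha with ha | ha <;> rcases Finset.mem_union.1 hb with hb | hb
  · exact hi _ ha _ hb hab
  · exact (hT' b hb).2 a ha hab
  · exact (hT' a ha).2 b hb hab.symm
  · exact hTi _ ha _ hb hab

/-- Domination with forced set `F` inside the projection `A`. -/
theorem two_domNum_le {W : Type*} [Fintype W] (H : SimpleGraph W) (A F I : Finset W)
    (hFA : F ⊆ A) (hI : ∀ h, h ∈ I ↔ h ∈ A ∧ h ∉ F ∧ ∀ g, H.Adj g h → g ∉ A)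
    (hout : ∀ h, h ∉ A → ∃ g ∈ F, H.Adj g h) :
    2 * domNum H ≤ A.card + F.card + I.card := by
  classical
  let B := (A \ F).filter (fun b => ∃ c ∈ A \ F, H.Adj c b)
  have hB : ∀ b, b ∈ B ↔ b ∈ A \ F ∧ ∃ c ∈ A \ F, H.Adj c b := fun b => by
    simp only [B, Finset.mem_filter]
  obtain ⟨S, hS, hd⟩ := exists_half H B (by
    intro b hb
    obtain ⟨h1, c, hc, h2⟩ := (hB b).1 hb
    exact ⟨c, (hB c).2 ⟨hc, b, h1, h2.symm⟩, h2⟩)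
  have hdom : IsDomSet H ↑(F ∪ I ∪ S) := by
    intro h
    by_cases hA : h ∈ A
    · by_cases hF : h ∈ F
      · exact Or.inl (by simp [hF])
      · by_cases hIh : h ∈ I
        · exact Or.inl (by simp [hIh])
        · have : ∃ g, H.Adj g h ∧ g ∈ A := by
            by_contra hcon
            push Not at hcon
            exact hIh ((hI h).2 ⟨hA, hF, hcon⟩)
          obtain ⟨g, hg, hgA⟩ := this
          by_cases hgF : g ∈ F
          · exact Or.inr ⟨g, by simp [hgF], hg⟩
          · rcases hd h ((hB h).2 ⟨Finset.mem_sdiff.2 ⟨hA, hF⟩, g,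
              Finset.mem_sdiff.2 ⟨hgA, hgF⟩, hg⟩) with h | ⟨s, hs, h⟩
            · exact Or.inl (by simp [h])
            · exact Or.inr ⟨s, by simp [hs], h⟩
    · obtain ⟨g, hg, h⟩ := hout h hA
      exact Or.inr ⟨g, by simp [hg], h⟩
  have h1 := domNum_le_card hdom
  have h2 := Finset.card_union_le (F ∪ I) S
  have h3 := Finset.card_union_le F I
  have h4 := Finset.card_sdiff_add_card_eq_card hFA
  have h5 : (B ∪ I).card = B.card + I.card := by
    apply Finset.card_union_of_disjoint
    rw [Finset.disjoint_left]
    intro b hb hb'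
    obtain ⟨_, c, hc, hcb⟩ := (hB b).1 hb
    exact ((hI b).1 hb').2.2 c hcb (Finset.mem_sdiff.1 hc).1
  have h6 : (B ∪ I).card ≤ (A \ F).card := by
    apply Finset.card_le_card
    intro b hb
    rcases Finset.mem_union.1 hb with hb | hb
    · exact ((hB b).1 hb).1
    · exact Finset.mem_sdiff.2 ⟨((hI b).1 hb).1, ((hI b).1 hb).2.1⟩
  omega

theorem clawfree_vizing_bound {V W : Type*} [Fintype V] [Fintype W]
    (G : SimpleGraph V) (H : SimpleGraph W) (hG : IsClawFree G) :
    3 * domNum (G.boxProd H) ≥ 2 * (domNum G * domNum H) := by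
  classical
  obtain ⟨Γ, hΓ, hΓc, hΓi⟩ := exists_indep_min hG
  obtain ⟨D, hD, hDc⟩ := exists_domNum (G.boxProd H)
  let N : V → V → Prop := fun i v => v = i ∨ G.Adj i v
  let Q : V → V → Prop := fun i v => N i v ∧ ∀ l ∈ Γ, N l v → l = i
  let A : V → Finset W := fun i => Finset.univ.filter (fun h => ∃ v, N i v ∧ (v, h) ∈ D)
  let F : V → Finset W := fun i => Finset.univ.filter (fun h => ∃ v, Q i v ∧ (v, h) ∈ D)
  let I : V → Finset W := fun i => Finset.univ.filter
    (fun h => h ∈ A i ∧ h ∉ F i ∧ ∀ g, H.Adj g h → g ∉ A i)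
  have hA : ∀ i h, h ∈ A i ↔ ∃ v, N i v ∧ (v, h) ∈ D := fun i h => by simp [A]
  have hF : ∀ i h, h ∈ F i ↔ ∃ v, Q i v ∧ (v, h) ∈ D := fun i h => by simp [F]
  have hI : ∀ i h, h ∈ I i ↔ h ∈ A i ∧ h ∉ F i ∧ ∀ g, H.Adj g h → g ∉ A i :=
    fun i h => by simp only [I, Finset.mem_filter, Finset.mem_univ, true_and]
  have step1 : ∀ i ∈ Γ, 2 * domNum H ≤ (A i).card + (F i).card + (I i).card := by
    intro i hi
    apply two_domNum_le H (A i) (F i) (I i) _ (hI i)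
    · intro h hh
      have hQi : Q i i := by
        refine ⟨Or.inl rfl, ?_⟩
        rintro l hl (h | h)
        · exact h.symm
        · exact absurd h (hΓi l hl i hi)
      rcases hD (i, h) with h1 | ⟨⟨u, g⟩, hu, h1⟩
      · exact absurd ((hA i h).2 ⟨i, Or.inl rfl, h1⟩) hh
      · rw [SimpleGraph.boxProd_adj] at h1
        rcases h1 with ⟨h1, h2⟩ | ⟨h1, h2⟩
        · simp only at h1 h2
          subst h2
          exact absurd ((hA i _).2 ⟨u, Or.inr h1.symm, hu⟩) hh
        · simp only at h1 h2
          subst h2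
          exact ⟨g, (hF _ g).2 ⟨_, hQi, hu⟩, h1⟩
    · intro h hh
      obtain ⟨v, hv, hvD⟩ := (hF i h).1 hh
      exact (hA i h).2 ⟨v, hv.1, hvD⟩
  have cA : ∀ i, (A i).card ≤ (D.filter (fun p => N i p.1)).card := by
    intro i
    refine le_trans (Finset.card_le_card ?_) (Finset.card_image_le (f := Prod.snd))
    intro h hh
    obtain ⟨v, hv, hvD⟩ := (hA i h).1 hh
    exact Finset.mem_image.2 ⟨(v, h), Finset.mem_filter.2 ⟨hvD, hv⟩, rfl⟩
  have cF : ∀ i, (F i).card ≤ (D.filter (fun p => Q i p.1)).card := by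
    intro i
    refine le_trans (Finset.card_le_card ?_) (Finset.card_image_le (f := Prod.snd))
    intro h hh
    obtain ⟨v, hv, hvD⟩ := (hF i h).1 hh
    exact Finset.mem_image.2 ⟨(v, h), Finset.mem_filter.2 ⟨hvD, hv⟩, rfl⟩
  have pt : ∀ v : V, (Γ.filter (fun i => N i v)).card + (Γ.filter (fun i => Q i v)).card ≤ 2 := by
    intro v
    by_cases hq : ∃ i ∈ Γ, Q i v
    · obtain ⟨i, hi, hQ⟩ := hq
      have e1 : (Γ.filter (fun i => N i v)).card ≤ ({i} : Finset V).card := by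
        apply Finset.card_le_card
        intro l hl
        rw [Finset.mem_filter] at hl
        exact Finset.mem_singleton.2 (hQ.2 l hl.1 hl.2)
      have e2 : (Γ.filter (fun i => Q i v)).card ≤ ({i} : Finset V).card := by
        apply Finset.card_le_card
        intro l hl
        rw [Finset.mem_filter] at hl
        exact Finset.mem_singleton.2 (hQ.2 l hl.1 hl.2.1)
      rw [Finset.card_singleton] at e1 e2
      omega
    · have e2 : Γ.filter (fun i => Q i v) = ∅ := by
        rw [Finset.filter_eq_empty_iff]
        intro i hi hQ
        exact hq ⟨i, hi, hQ⟩
      rw [e2, Finset.card_empty, add_zero]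
      by_contra hcon
      push Not at hcon
      obtain ⟨a, b, c, ha, hb, hc, hab, hac, hbc⟩ := Finset.two_lt_card_iff.1 hcon
      rw [Finset.mem_filter] at ha hb hc
      have adj : ∀ x ∈ Γ, ∀ y ∈ Γ, x ≠ y → N x v → N y v → G.Adj v x := by
        rintro x hx y hy hxy (h | h) hy'
        · subst h
          rcases hy' with h | h
          · exact absurd h hxy
          · exact absurd h (hΓi y hy _ hx)
        · exact h.symm
      exact claw_absurd hG (adj a ha.1 b hb.1 hab ha.2 hb.2)
        (adj b hb.1 a ha.1 hab.symm hb.2 ha.2) (adj c hc.1 a ha.1 hac.symm hc.2 ha.2)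
        hab hac hbc (hΓi a ha.1 b hb.1) (hΓi a ha.1 c hc.1) (hΓi b hb.1 c hc.1)
  have step2 : ∑ i ∈ Γ, ((A i).card + (F i).card) ≤ 2 * D.card := by
    calc ∑ i ∈ Γ, ((A i).card + (F i).card)
        ≤ ∑ i ∈ Γ, ((D.filter (fun p => N i p.1)).card + (D.filter (fun p => Q i p.1)).card) :=
          Finset.sum_le_sum (fun i _ => add_le_add (cA i) (cF i))
      _ = ∑ p ∈ D, ((Γ.filter (fun i => N i p.1)).card + (Γ.filter (fun i => Q i p.1)).card) := by
          simp only [Finset.card_filter, ← Finset.sum_add_distrib]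
          exact Finset.sum_comm
      _ ≤ ∑ p ∈ D, 2 := Finset.sum_le_sum (fun p _ => pt p.1)
      _ = 2 * D.card := by rw [Finset.sum_const, smul_eq_mul, mul_comm]
  have layer : ∀ h : W, (Γ.filter (fun i => h ∈ I i)).card ≤ (D.filter (fun p => p.2 = h)).card := by
    intro h
    have hdom : IsDomSet G
        ↑((D.filter (fun p => p.2 = h)).image Prod.fst ∪ (Γ \ Γ.filter (fun i => h ∈ I i))) := by
      intro v
      have memD : ∀ u, (u, h) ∈ D → u ∈
          ((D.filter (fun p => p.2 = h)).image Prod.fst ∪ (Γ \ Γ.filter (fun i => h ∈ I i))) :=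
        fun u hu => Finset.mem_union_left _
          (Finset.mem_image.2 ⟨(u, h), Finset.mem_filter.2 ⟨hu, rfl⟩, rfl⟩)
      have hl : ∃ l ∈ Γ, N l v := by
        rcases hΓ v with h | ⟨l, hl, h⟩
        · exact ⟨v, h, Or.inl rfl⟩
        · exact ⟨l, hl, Or.inr h⟩
      obtain ⟨l, hlΓ, hl⟩ := hl
      by_cases hlI : h ∈ I l
      · rcases hD (v, h) with h1 | ⟨⟨u, g⟩, hu, h1⟩
        · exact Or.inl (memD v h1)
        · rw [SimpleGraph.boxProd_adj] at h1
          rcases h1 with ⟨h1, h2⟩ | ⟨h1, h2⟩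
          · simp only at h1 h2
            subst h2
            exact Or.inr ⟨u, memD u hu, h1⟩
          · simp only at h1 h2
            subst h2
            exact absurd ((hA l g).2 ⟨_, hl, hu⟩) (((hI l h).1 hlI).2.2 g h1)
      · have hm : l ∈
          ((D.filter (fun p => p.2 = h)).image Prod.fst ∪ (Γ \ Γ.filter (fun i => h ∈ I i))) := by
          apply Finset.mem_union_right
          rw [Finset.mem_sdiff, Finset.mem_filter]
          exact ⟨hlΓ, fun hh => hlI hh.2⟩
        rcases hl with rfl | hl
        · exact Or.inl hm
        · exact Or.inr ⟨l, hm, hl⟩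
    have h1 := domNum_le_card hdom
    have h2 := Finset.card_union_le ((D.filter (fun p => p.2 = h)).image Prod.fst)
      (Γ \ Γ.filter (fun i => h ∈ I i))
    have h3 : ((D.filter (fun p => p.2 = h)).image Prod.fst).card ≤ _ := Finset.card_image_le
    have h4 := Finset.card_sdiff_add_card_eq_card (Finset.filter_subset (fun i => h ∈ I i) Γ)
    omega
  have step3 : ∑ i ∈ Γ, (I i).card ≤ D.card := by
    calc ∑ i ∈ Γ, (I i).card
        = ∑ i ∈ Γ, ((Finset.univ : Finset W).filter (fun h => h ∈ I i)).card := by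
          simp
      _ = ∑ h : W, (Γ.filter (fun i => h ∈ I i)).card := by
          simp only [Finset.card_filter]
          exact Finset.sum_comm
      _ ≤ ∑ h : W, (D.filter (fun p => p.2 = h)).card := Finset.sum_le_sum (fun h _ => layer h)
      _ = D.card := (Finset.card_eq_sum_card_fiberwise (fun p _ => Finset.mem_univ p.2)).symm
  have step4 : Γ.card * (2 * domNum H) ≤ ∑ i ∈ Γ, ((A i).card + (F i).card + (I i).card) := by
    rw [← smul_eq_mul, ← Finset.sum_const]
    exact Finset.sum_le_sum step1
  rw [Finset.sum_add_distrib] at step4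
  rw [← hDc, ← hΓc]
  nlinarith
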